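/- Let κ ≥ 0 and define σ(η,κ) := −ln(√ρ₊(η,κ) + √(ρ₊(η,κ) − 1)) for η ≥ −κ² and σ(η,κ) := +ln(√ρ₋(η,κ) + √(ρ₋(η,κ) − 1)) for η ≤ −κ² (consistently σ(−κ²,κ) = 0). Then for each fixed κ ≥ 0 the map η ↦ σ(η,κ) is a strictly decreasing bijection from ℝ onto ℝ, and it satisfies the pointwise bound |σ(η,κ)| ≤ ln(1 + 2√|η| + 2κ) for all η ∈ ℝ. -/

import Mathlib

noncomputable section

/-- `G(y) = √(y(y−1)) + ln(√y + √(y−1))`. -/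
def Gf (y : ℝ) : ℝ := Real.sqrt (y * (y - 1)) + Real.log (Real.sqrt y + Real.sqrt (y - 1))

/-- `P₊(y) = 2y − 1 + 2√(y(y−1))`. -/
def Pp (y : ℝ) : ℝ := 2 * y - 1 + 2 * Real.sqrt (y * (y - 1))

/-- `P₋(y) = 2y − 1 − 2√(y(y−1))`. -/
def Pm (y : ℝ) : ℝ := 2 * y - 1 - 2 * Real.sqrt (y * (y - 1))

/-!
Substitute `ρ = cosh² s` with `s ≥ 0`: then `ln(√ρ + √(ρ − 1)) = s`, `G(ρ) = sinh(2s)/2 + s` and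
`P_±(ρ) = e^{±2s}`. With `σ = −s` on the `ρ₊` branch and `σ = s` on the `ρ₋` branch, both implicit
equations become the single equation `F(σ(η)) = η`, where `F(t) = −(sinh(2t)/2 + t + κ² e^{2t})` is
strictly decreasing on `ℝ`. Hence `σ` is the two-sided inverse of `F`.

For the bound, `e^{|σ|} ≤ 1 + 2 sinh |σ|`, while `sinh² σ ≤ sinh(2|σ|)/2 ≤ |F(σ)| + κ²`.
-/

section

open Real

lemma exists_cosh_sq_eq {ρ : ℝ} (hρ : 1 ≤ ρ) : ∃ s, 0 ≤ s ∧ cosh s ^ 2 = ρ := by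
  have hsqrt : 1 ≤ √ρ := one_le_sqrt.2 hρ
  exact ⟨arcosh √ρ, arcosh_nonneg hsqrt, by rw [cosh_arcosh hsqrt, sq_sqrt (by linarith)]⟩

lemma log_sqrt_cosh_sq_add_sqrt {s : ℝ} (hs : 0 ≤ s) :
    log (√(cosh s ^ 2) + √(cosh s ^ 2 - 1)) = s := by
  rw [← sinh_sq, sqrt_sq (cosh_pos s).le, sqrt_sq (sinh_nonneg_iff.2 hs), cosh_add_sinh, log_exp]

lemma sqrt_cosh_sq_mul_sub_one {s : ℝ} (hs : 0 ≤ s) :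
    √(cosh s ^ 2 * (cosh s ^ 2 - 1)) = cosh s * sinh s := by
  rw [← sinh_sq, ← mul_pow, sqrt_sq (mul_nonneg (cosh_pos s).le (sinh_nonneg_iff.2 hs))]

lemma Gf_cosh_sq {s : ℝ} (hs : 0 ≤ s) : Gf (cosh s ^ 2) = sinh (2 * s) / 2 + s := by
  rw [Gf, sqrt_cosh_sq_mul_sub_one hs, log_sqrt_cosh_sq_add_sqrt hs, sinh_two_mul]
  ring

lemma Pp_cosh_sq {s : ℝ} (hs : 0 ≤ s) : Pp (cosh s ^ 2) = exp (2 * s) := by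
  rw [Pp, sqrt_cosh_sq_mul_sub_one hs, ← cosh_add_sinh, cosh_two_mul, sinh_two_mul, sinh_sq]
  ring

lemma Pm_cosh_sq {s : ℝ} (hs : 0 ≤ s) : Pm (cosh s ^ 2) = exp (-(2 * s)) := by
  rw [Pm, sqrt_cosh_sq_mul_sub_one hs, ← cosh_sub_sinh, cosh_two_mul, sinh_two_mul, sinh_sq]
  ring

/-- The inverse of `η ↦ σ(η, κ)`, given in closed form by rewriting either implicit equation in
terms of `t = σ`. -/
def sigmaInv (κ t : ℝ) : ℝ := -(sinh (2 * t) / 2 + t + κ ^ 2 * exp (2 * t))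

lemma strictAnti_sigmaInv (κ : ℝ) : StrictAnti (sigmaInv κ) := by
  intro a b hab
  have hsinh : sinh (2 * a) < sinh (2 * b) := sinh_lt_sinh.2 (by linarith)
  have hexp : κ ^ 2 * exp (2 * a) ≤ κ ^ 2 * exp (2 * b) := by gcongr
  unfold sigmaInv
  linarith

lemma sigmaInv_neg_log (κ : ℝ) {ρ : ℝ} (hρ : 1 ≤ ρ) :
    sigmaInv κ (-log (√ρ + √(ρ - 1))) = Gf ρ - κ ^ 2 * Pm ρ := by
  obtain ⟨s, hs, rfl⟩ := exists_cosh_sq_eq hρ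
  rw [log_sqrt_cosh_sq_add_sqrt hs, Gf_cosh_sq hs, Pm_cosh_sq hs, sigmaInv, mul_neg, sinh_neg]
  ring

lemma sigmaInv_log (κ : ℝ) {ρ : ℝ} (hρ : 1 ≤ ρ) :
    sigmaInv κ (log (√ρ + √(ρ - 1))) = -Gf ρ - κ ^ 2 * Pp ρ := by
  obtain ⟨s, hs, rfl⟩ := exists_cosh_sq_eq hρ
  rw [log_sqrt_cosh_sq_add_sqrt hs, Gf_cosh_sq hs, Pp_cosh_sq hs, sigmaInv]
  ring

lemma sinh_sq_le_sinh_two_mul_div_two {s : ℝ} (hs : 0 ≤ s) : sinh s ^ 2 ≤ sinh (2 * s) / 2 := by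
  calc sinh s ^ 2 = sinh s * sinh s := sq _
    _ ≤ sinh s * cosh s := mul_le_mul_of_nonneg_left (sinh_lt_cosh s).le (sinh_nonneg_iff.2 hs)
    _ = sinh (2 * s) / 2 := by rw [sinh_two_mul]; ring

lemma sinh_sq_le_abs_sigmaInv_add_sq (κ t : ℝ) : sinh t ^ 2 ≤ |sigmaInv κ t| + κ ^ 2 := by
  rcases le_total 0 t with ht | ht
  · have hsinh := sinh_sq_le_sinh_two_mul_div_two ht
    have hexp : 0 ≤ κ ^ 2 * exp (2 * t) := by positivity
    have habs : -sigmaInv κ t ≤ |sigmaInv κ t| := neg_le_abs _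
    have hκ : 0 ≤ κ ^ 2 := sq_nonneg κ
    unfold sigmaInv at habs ⊢
    linarith
  · have hsinh := sinh_sq_le_sinh_two_mul_div_two (neg_nonneg.2 ht)
    rw [mul_neg, sinh_neg, sinh_neg, neg_sq] at hsinh
    have hexp : κ ^ 2 * exp (2 * t) ≤ κ ^ 2 :=
      mul_le_of_le_one_right (sq_nonneg κ) (exp_le_one_iff.2 (by linarith))
    have habs : sigmaInv κ t ≤ |sigmaInv κ t| := le_abs_self _
    unfold sigmaInv at habs ⊢
    linarith

lemma exp_le_one_add_two_mul_sinh {s : ℝ} (hs : 0 ≤ s) : exp s ≤ 1 + 2 * sinh s := by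
  have hexp : exp (-s) ≤ 1 := exp_le_one_iff.2 (by linarith)
  rw [sinh_eq]
  linarith

lemma abs_le_log_one_add_sqrt_abs_sigmaInv (κ t : ℝ) :
    |t| ≤ log (1 + 2 * √|sigmaInv κ t| + 2 * |κ|) := by
  rw [le_log_iff_exp_le (by positivity)]
  have hsq : sinh t ^ 2 ≤ (√|sigmaInv κ t| + |κ|) ^ 2 :=
    calc sinh t ^ 2 ≤ |sigmaInv κ t| + κ ^ 2 := sinh_sq_le_abs_sigmaInv_add_sq κ t
      _ = √|sigmaInv κ t| ^ 2 + |κ| ^ 2 := by rw [sq_sqrt (abs_nonneg _), sq_abs]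
      _ ≤ (√|sigmaInv κ t| + |κ|) ^ 2 := pow_add_pow_le (sqrt_nonneg _) (abs_nonneg _) two_ne_zero
  have hsinh : sinh |t| ≤ √|sigmaInv κ t| + |κ| := by
    rw [← abs_sinh]
    exact abs_le_of_sq_le_sq hsq (by positivity)
  linarith [exp_le_one_add_two_mul_sinh (abs_nonneg t)]

end

/-- Let `ρ₊(η)` (for `η ≥ −κ²`) and `ρ₋(η)` (for `η ≤ −κ²`) be the solutions in `[1,∞)` of
`η − G(ρ) + κ²P₋(ρ) = 0` resp. `η + G(ρ) + κ²P₊(ρ) = 0`, and define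
`σ(η) = −ln(√ρ₊ + √(ρ₊ − 1))` for `η ≥ −κ²` and `σ(η) = ln(√ρ₋ + √(ρ₋ − 1))` for
`η ≤ −κ²`.  Then `σ` is a strictly decreasing bijection of `ℝ` onto `ℝ` and
`|σ(η)| ≤ ln(1 + 2√|η| + 2κ)` for all `η`. -/
theorem sigma_bijection_and_bound (κ : ℝ) (hκ : 0 ≤ κ) (ρp ρm σ : ℝ → ℝ)
    (hρp : ∀ η, -κ ^ 2 ≤ η → 1 ≤ ρp η ∧ η - Gf (ρp η) + κ ^ 2 * Pm (ρp η) = 0)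
    (hρm : ∀ η, η ≤ -κ ^ 2 → 1 ≤ ρm η ∧ η + Gf (ρm η) + κ ^ 2 * Pp (ρm η) = 0)
    (hσp : ∀ η, -κ ^ 2 ≤ η →
      σ η = -Real.log (Real.sqrt (ρp η) + Real.sqrt (ρp η - 1)))
    (hσm : ∀ η, η ≤ -κ ^ 2 →
      σ η = Real.log (Real.sqrt (ρm η) + Real.sqrt (ρm η - 1))) :
    StrictAnti σ ∧ Function.Bijective σ ∧
      ∀ η, |σ η| ≤ Real.log (1 + 2 * Real.sqrt |η| + 2 * κ) := by
  have hinv : Function.LeftInverse (sigmaInv κ) σ := by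
    intro η
    rcases le_total (-κ ^ 2) η with h | h
    · obtain ⟨hρ, hη⟩ := hρp η h
      rw [hσp η h, sigmaInv_neg_log κ hρ]
      linarith
    · obtain ⟨hρ, hη⟩ := hρm η h
      rw [hσm η h, sigmaInv_log κ hρ]
      linarith
  have hanti := strictAnti_sigmaInv κ
  refine ⟨fun a b hab => ?_, ⟨hinv.injective, ?_⟩, fun η => ?_⟩
  · rwa [← hanti.lt_iff_gt, hinv, hinv]
  · exact (hinv.rightInverse_of_injective hanti.injective).surjective
  · simpa only [hinv η, abs_of_nonneg hκ] using abs_le_log_one_add_sqrt_abs_sigmaInv κ (σ η)
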